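/- arXiv:0812.1171 — 8 statements merged into one kernel-verified Lean document; each statement's English description precedes it below -/
import Mathlib

section
/- The hypersurface W^{-1}(0) ⊂ ℂ³ has exactly one singular point, namely the origin. That is: the origin satisfies W(0)=0 and ∂₁W(0)=∂₂W(0)=∂₃W(0)=0, and conversely every point a ∈ ℂ³ satisfying W(a)=0 and ∂₁W(a)=∂₂W(a)=∂₃W(a)=0 equals 0. -/
open MvPolynomial

/-- The superpotential `W = -v₁v₂v₃ + v₁⁵ + v₂⁵ + v₃⁵` as a polynomial in three variables. -/
noncomputable def W : MvPolynomial (Fin 3) ℂ :=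
  - (X 0 * X 1 * X 2) + X 0 ^ 5 + X 1 ^ 5 + X 2 ^ 5

/-- The hypersurface `W⁻¹(0) ⊂ ℂ³` has exactly one singular point, the origin:
the origin lies on the hypersurface and all partial derivatives of `W` vanish there,
and conversely any point of the hypersurface at which all partial derivatives of `W`
vanish is the origin. -/
theorem singular_locus_of_W_is_origin :
    (eval (0 : Fin 3 → ℂ) W = 0 ∧ ∀ i : Fin 3, eval (0 : Fin 3 → ℂ) (pderiv i W) = 0) ∧
    (∀ a : Fin 3 → ℂ, eval a W = 0 → (∀ i : Fin 3, eval a (pderiv i W) = 0) → a = 0) := by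
  have hpd : ∀ a : Fin 3 → ℂ,
      eval a (pderiv 0 W) = -(a 1 * a 2) + 5 * a 0 ^ 4 ∧
      eval a (pderiv 1 W) = -(a 0 * a 2) + 5 * a 1 ^ 4 ∧
      eval a (pderiv 2 W) = -(a 0 * a 1) + 5 * a 2 ^ 4 := by
    intro a
    refine ⟨?_, ?_, ?_⟩ <;>
      simp [W, Derivation.leibniz, Derivation.leibniz_pow, pderiv_X, Pi.single_apply] <;> ring
  have hW : ∀ a : Fin 3 → ℂ,
      eval a W = -(a 0 * a 1 * a 2) + a 0 ^ 5 + a 1 ^ 5 + a 2 ^ 5 := by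
    intro a
    simp [W]
  refine ⟨⟨by rw [hW]; simp, ?_⟩, ?_⟩
  · obtain ⟨h0, h1, h2⟩ := hpd 0
    intro i
    fin_cases i
    · exact h0.trans (by simp)
    · exact h1.trans (by simp)
    · exact h2.trans (by simp)
  · intro a ha hd
    obtain ⟨h0, h1, h2⟩ := hpd a
    rw [hd] at h0 h1 h2
    rw [hW] at ha
    have hp : a 0 * a 1 * a 2 = 0 := by
      linear_combination (-5 / 2) * ha - (1 / 2) * (a 0 * h0 + a 1 * h1 + a 2 * h2)
    have e0 : a 0 ^ 5 = 0 := by linear_combination (1 / 5) * hp - (1 / 5) * a 0 * h0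
    have e1 : a 1 ^ 5 = 0 := by linear_combination (1 / 5) * hp - (1 / 5) * a 1 * h1
    have e2 : a 2 ^ 5 = 0 := by linear_combination (1 / 5) * hp - (1 / 5) * a 2 * h2
    funext i
    fin_cases i
    · exact eq_zero_of_pow_eq_zero e0
    · exact eq_zero_of_pow_eq_zero e1
    · exact eq_zero_of_pow_eq_zero e2
end

section
/- The ideal I = (∂₁W, ∂₂W, ∂₃W) generated by the partial derivatives of W in the formal power series ring ℂ[[v₁,v₂,v₃]] has finite codimension: the quotient ℂ[[v₁,v₂,v₃]]/I is a finite-dimensional complex vector space. -/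
open MvPowerSeries

/-- The partial derivatives `∂₁W = -v₂v₃ + 5v₁⁴`, `∂₂W = -v₁v₃ + 5v₂⁴`,
`∂₃W = -v₁v₂ + 5v₃⁴` of `W = -v₁v₂v₃ + v₁⁵ + v₂⁵ + v₃⁵`, as formal power series. -/
noncomputable def dW : Fin 3 → MvPowerSeries (Fin 3) ℂ :=
  ![ - (X 1 * X 2) + 5 * X 0 ^ 4,
     - (X 0 * X 2) + 5 * X 1 ^ 4,
     - (X 0 * X 1) + 5 * X 2 ^ 4 ]

/-- The Jacobian ideal `I = (∂₁W, ∂₂W, ∂₃W) ⊂ ℂ[[v₁,v₂,v₃]]`. -/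
noncomputable def JacobianIdeal : Ideal (MvPowerSeries (Fin 3) ℂ) :=
  Ideal.span {dW 0, dW 1, dW 2}

/-- In any commutative ring, the three relations give `5 z ^ 6 = 15625 z ^ 16`. -/
theorem pow_six_rel {R : Type*} [CommRing R] (I : Ideal R) (x y z : R)
    (hx : -(y * z) + 5 * x ^ 4 ∈ I) (hy : -(x * z) + 5 * y ^ 4 ∈ I)
    (hz : -(x * y) + 5 * z ^ 4 ∈ I) : 5 * z ^ 6 * (1 - 3125 * z ^ 10) ∈ I := by
  rw [← Ideal.Quotient.eq_zero_iff_mem] at *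
  simp only [map_add, map_neg, map_mul, map_sub, map_pow, map_one, map_ofNat] at *
  generalize Ideal.Quotient.mk I x = a at *
  generalize Ideal.Quotient.mk I y = b at *
  generalize Ideal.Quotient.mk I z = c at *
  have h1 : b * c = 5 * a ^ 4 := by linear_combination -hx
  have h2 : a * c = 5 * b ^ 4 := by linear_combination -hy
  have h3 : a * b = 5 * c ^ 4 := by linear_combination -hz
  have h4 : (b * c) * (a * c) = 25 * (a * b) ^ 4 := by rw [h1, h2]; ring
  have h5 : (b * c) * (a * c) = c ^ 2 * (a * b) := by ring
  rw [h5, h3] at h4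
  linear_combination h4

theorem X_pow_six_mem (I : Ideal (MvPowerSeries (Fin 3) ℂ)) (s : Fin 3)
    (h : 5 * (X s : MvPowerSeries (Fin 3) ℂ) ^ 6 * (1 - 3125 * X s ^ 10) ∈ I) :
    (X s : MvPowerSeries (Fin 3) ℂ) ^ 6 ∈ I := by
  have hu : IsUnit (1 - 3125 * (X s : MvPowerSeries (Fin 3) ℂ) ^ 10) := by
    rw [MvPowerSeries.isUnit_iff_constantCoeff]
    simp
  have h5 : IsUnit (5 : MvPowerSeries (Fin 3) ℂ) := by
    rw [MvPowerSeries.isUnit_iff_constantCoeff, map_ofNat]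
    simp
  rw [mul_comm, Ideal.unit_mul_mem_iff_mem I hu, Ideal.unit_mul_mem_iff_mem I h5] at h
  exact h

theorem X_pow_six_mem_jacobian (s : Fin 3) :
    (X s : MvPowerSeries (Fin 3) ℂ) ^ 6 ∈ JacobianIdeal := by
  have h0 : - (X 1 * X 2) + 5 * X 0 ^ 4 ∈ JacobianIdeal :=
    Ideal.subset_span (by simp [dW])
  have h1 : - (X 0 * X 2) + 5 * X 1 ^ 4 ∈ JacobianIdeal :=
    Ideal.subset_span (by simp [dW])
  have h2 : - (X 0 * X 1) + 5 * X 2 ^ 4 ∈ JacobianIdeal :=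
    Ideal.subset_span (by simp [dW])
  apply X_pow_six_mem
  fin_cases s
  · exact pow_six_rel _ (X 1) (X 2) (X 0) (by rwa [mul_comm]) (by rwa [mul_comm]) h0
  · exact pow_six_rel _ (X 0) (X 2) (X 1) (by rwa [mul_comm]) h2 h1
  · exact pow_six_rel _ (X 0) (X 1) (X 2) h0 h1 h2

/-- The coefficients with all exponents at most five. -/
noncomputable def lowCoeffs : MvPowerSeries (Fin 3) ℂ →ₗ[ℂ] ((Fin 3 → Fin 6) → ℂ) :=
  LinearMap.pi fun d => coeff (Finsupp.equivFunOnFinite.symm fun i => (d i : ℕ))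

theorem mem_of_lowCoeffs_eq_zero (I : Ideal (MvPowerSeries (Fin 3) ℂ))
    (hI : ∀ s, (X s : MvPowerSeries (Fin 3) ℂ) ^ 6 ∈ I)
    (f : MvPowerSeries (Fin 3) ℂ) (hf : lowCoeffs f = 0) : f ∈ I := by
  have hlow : ∀ m : Fin 3 →₀ ℕ, m 0 < 6 → m 1 < 6 → m 2 < 6 → coeff m f = 0 := by
    intro m h0 h1 h2
    have hm : ∀ i, m i < 6 := by
      intro i
      fin_cases i <;> assumption
    have := congrFun hf (fun i => ⟨m i, hm i⟩)
    simp only [lowCoeffs, LinearMap.pi_apply, Pi.zero_apply] at this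
    convert this using 2
    ext i
    simp
  let f0 : MvPowerSeries (Fin 3) ℂ := fun m => if m 0 < 6 then 0 else coeff m f
  let f1 : MvPowerSeries (Fin 3) ℂ :=
    fun m => if m 0 < 6 then (if m 1 < 6 then 0 else coeff m f) else 0
  let f2 : MvPowerSeries (Fin 3) ℂ :=
    fun m => if m 0 < 6 then (if m 1 < 6 then coeff m f else 0) else 0
  have e0 : ∀ m, coeff m f0 = if m 0 < 6 then 0 else coeff m f := fun m => rfl
  have e1 : ∀ m, coeff m f1 = if m 0 < 6 then (if m 1 < 6 then 0 else coeff m f) else 0 :=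
    fun m => rfl
  have e2 : ∀ m, coeff m f2 = if m 0 < 6 then (if m 1 < 6 then coeff m f else 0) else 0 :=
    fun m => rfl
  have hsum : f = f0 + f1 + f2 := by
    ext m
    rw [map_add, map_add, e0, e1, e2]
    split_ifs <;> simp
  rw [hsum]
  refine I.add_mem (I.add_mem ?_ ?_) ?_
  · refine I.mem_of_dvd (X_pow_dvd_iff.2 fun m hm => ?_) (hI 0)
    rw [e0, if_pos hm]
  · refine I.mem_of_dvd (X_pow_dvd_iff.2 fun m hm => ?_) (hI 1)
    rw [e1, if_pos hm, ite_self]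
  · refine I.mem_of_dvd (X_pow_dvd_iff.2 fun m hm => ?_) (hI 2)
    rw [e2]
    split_ifs with h0 h1
    · exact hlow m h0 h1 hm
    · rfl
    · rfl

/-- The Jacobian ideal of `W` has finite codimension: the quotient
`ℂ[[v₁,v₂,v₃]]/(∂₁W, ∂₂W, ∂₃W)` is a finite-dimensional complex vector space. -/
theorem jacobian_quotient_finiteDimensional :
    FiniteDimensional ℂ (MvPowerSeries (Fin 3) ℂ ⧸ JacobianIdeal) := by
  have hle : LinearMap.ker lowCoeffs ≤
      LinearMap.ker (Ideal.Quotient.mkₐ ℂ JacobianIdeal).toLinearMap := by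
    intro f hf
    rw [LinearMap.mem_ker] at hf ⊢
    exact Ideal.Quotient.eq_zero_iff_mem.2
      (mem_of_lowCoeffs_eq_zero _ X_pow_six_mem_jacobian f hf)
  have : Module.Finite ℂ (MvPowerSeries (Fin 3) ℂ ⧸ LinearMap.ker lowCoeffs) :=
    Module.Finite.equiv lowCoeffs.quotKerEquivRange.symm
  refine Module.Finite.of_surjective ((LinearMap.ker lowCoeffs).liftQ _ hle) ?_
  intro q
  obtain ⟨f, rfl⟩ := Ideal.Quotient.mk_surjective q
  exact ⟨Submodule.Quotient.mk f, rfl⟩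
end

section
/- The three partial derivatives ∂₁W = -v₂v₃ + 5v₁⁴, ∂₂W = -v₁v₃ + 5v₂⁴, ∂₃W = -v₁v₂ + 5v₃⁴ form a regular sequence in the formal power series ring ℂ[[v₁,v₂,v₃]]. -/
open MvPowerSeries

lemma weaklyRegular_three_iff {R : Type*} [CommRing R] (a b c : R) :
    RingTheory.Sequence.IsWeaklyRegular R [a, b, c] ↔
      (∀ h, a * h = 0 → h = 0) ∧ (∀ h, b * h ∈ Ideal.span {a} → h ∈ Ideal.span {a}) ∧
      (∀ h, c * h ∈ Ideal.span {a, b} → h ∈ Ideal.span {a, b}) := by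
  have h0 : (Ideal.ofList ([] : List R) • ⊤ : Submodule R R) = ⊥ := by simp
  have h1 : (Ideal.ofList [a] • ⊤ : Submodule R R) = Ideal.span {a} := by
    simp [Ideal.ofList_singleton]
  have h2 : (Ideal.ofList [a, b] • ⊤ : Submodule R R) = Ideal.span {a, b} := by
    rw [Ideal.span_insert]
    simp [Ideal.ofList_cons, Ideal.ofList_singleton]
  rw [RingTheory.Sequence.isWeaklyRegular_iff_Fin]
  simp only [isSMulRegular_quotient_iff_mem_of_smul_mem]
  constructor
  · intro H
    refine ⟨?_, ?_, ?_⟩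
    · have := H ⟨0, by simp⟩
      simp only [List.take_zero, h0] at this
      simpa using this
    · have := H ⟨1, by simp⟩
      simp only [List.take_succ_cons, List.take_zero, h1] at this
      simpa using this
    · have := H ⟨2, by simp⟩
      simp only [List.take_succ_cons, List.take_zero, h2] at this
      simpa using this
  · rintro ⟨H0, H1, H2⟩ ⟨i, hi⟩
    simp only [List.length_cons, List.length_nil] at hi
    interval_cases i
    · simp only [List.take_zero, h0]
      simpa using H0
    · simp only [List.take_succ_cons, List.take_zero, h1]
      simpa using H1
    · simp only [List.take_succ_cons, List.take_zero, h2]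
      simpa using H2

/-- The relation forcing a power of the third variable into the Jacobian ideal. -/
lemma jacobian_rel {A : Type*} [CommRing A] (x y z : A) (e1 : -(y * z) + 5 * x ^ 4 = 0)
    (e2 : -(x * z) + 5 * y ^ 4 = 0) (e3 : -(x * y) + 5 * z ^ 4 = 0) :
    z ^ 10 * (25 - 78125 * z ^ 10) = 0 := by
  have a1 : y * z = 5 * x ^ 4 := by linear_combination -e1
  have a2 : x * z = 5 * y ^ 4 := by linear_combination -e2
  have a3 : x * y = 5 * z ^ 4 := by linear_combination -e3
  have p : x * y * z = 5 * z ^ 5 := by rw [a3]; ring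
  have q : (x * y * z) ^ 2 = 125 * (x * y * z) ^ 4 := by
    calc (x * y * z) ^ 2 = (y * z) * (x * z) * (x * y) := by ring
      _ = (5 * x ^ 4) * (5 * y ^ 4) * (5 * z ^ 4) := by rw [a1, a2, a3]
      _ = _ := by ring
  rw [p] at q
  linear_combination q

lemma mem_span_of_coeff (h : MvPowerSeries (Fin 3) ℂ)
    (H : ∀ m : Fin 3 →₀ ℕ, m 2 = 0 → m 0 < 4 → coeff m h = 0) :
    h ∈ Ideal.span {(X 2 : MvPowerSeries (Fin 3) ℂ), X 0 ^ 4} := by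
  let p : MvPowerSeries (Fin 3) ℂ := fun m => if m 2 = 0 then coeff m h else 0
  have hp : ∀ m, coeff m p = if m 2 = 0 then coeff m h else 0 := fun m => rfl
  have d1 : X 0 ^ 4 ∣ p := by
    rw [X_pow_dvd_iff]
    intro m hm
    rw [hp]
    split_ifs with h2
    · exact H m h2 hm
    · rfl
  have d2 : X 2 ∣ h - p := by
    rw [X_dvd_iff]
    intro m hm
    rw [map_sub, hp, if_pos hm, sub_self]
  obtain ⟨u, hu⟩ := d1
  obtain ⟨v, hv⟩ := d2
  rw [Ideal.mem_span_pair]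
  exact ⟨v, u, by linear_combination -hu - hv⟩

lemma coeff_shift (s : Fin 3) (h : MvPowerSeries (Fin 3) ℂ) (m : Fin 3 →₀ ℕ) :
    coeff (m + Finsupp.single s 4) (X s ^ 4 * h) = coeff m h := by
  rw [X_pow_eq, add_comm m, coeff_add_monomial_mul, one_mul]

lemma five_eq : (5 : MvPowerSeries (Fin 3) ℂ) * C (1 / 5) = 1 := by
  have : (5 : MvPowerSeries (Fin 3) ℂ) = C 5 := (map_ofNat C 5).symm
  rw [this, ← map_mul]
  norm_num

lemma aux_regular : RingTheory.Sequence.IsWeaklyRegular (MvPowerSeries (Fin 3) ℂ)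
    [X 2, dW 0, dW 1] := by
  rw [weaklyRegular_three_iff]
  have f5 := five_eq
  refine ⟨?_, ?_, ?_⟩
  · intro h hh
    have : (X 2 : MvPowerSeries (Fin 3) ℂ) ≠ 0 := by
      intro h0
      have := coeff_index_single_self_X (R := ℂ) (2 : Fin 3)
      rw [h0] at this
      simp at this
    exact (mul_eq_zero.mp hh).resolve_left this
  · intro h hh
    rw [Ideal.mem_span_singleton] at hh ⊢
    have hd : X 2 ∣ X 0 ^ 4 * h := by
      obtain ⟨k, hk⟩ := hh
      simp only [dW, Matrix.cons_val_zero] at hk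
      refine ⟨C (1 / 5) * (k + X 1 * h), ?_⟩
      linear_combination C (1 / 5) * hk - X 0 ^ 4 * h * f5
    rw [X_dvd_iff] at hd ⊢
    intro m hm
    rw [← coeff_shift 0]
    apply hd
    simp [hm]
  · intro h hh
    have hs : ∃ a b, X 1 ^ 4 * h = X 2 * a + X 0 ^ 4 * b := by
      obtain ⟨a, b, hk⟩ := Ideal.mem_span_pair.mp hh
      simp only [dW, Matrix.cons_val_zero, Matrix.cons_val_one] at hk
      refine ⟨C (1 / 5) * (a - b * X 1 + X 0 * h), C (1 / 5) * (5 * b), ?_⟩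
      linear_combination -C (1 / 5) * hk - X 1 ^ 4 * h * f5
    obtain ⟨a, b, hab⟩ := hs
    have key : h ∈ Ideal.span {(X 2 : MvPowerSeries (Fin 3) ℂ), X 0 ^ 4} := by
      apply mem_span_of_coeff
      intro m h2 h0
      rw [← coeff_shift 1, hab, map_add]
      rw [X_dvd_iff.mp (Dvd.intro a rfl) _ (by simp [h2]),
        X_pow_dvd_iff.mp (Dvd.intro b rfl) _ (by simpa using h0), add_zero]
    obtain ⟨c, d, hcd⟩ := Ideal.mem_span_pair.mp key
    rw [Ideal.mem_span_pair]
    refine ⟨c + C (1 / 5) * d * X 1, C (1 / 5) * d, ?_⟩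
    simp only [dW, Matrix.cons_val_zero]
    linear_combination hcd + d * X 0 ^ 4 * f5

lemma dW_mem (i : Fin 3) : dW i ∈ IsLocalRing.maximalIdeal (MvPowerSeries (Fin 3) ℂ) := by
  rw [IsLocalRing.mem_maximalIdeal, mem_nonunits_iff, isUnit_iff_constantCoeff]
  fin_cases i <;> simp [dW]

lemma X_mem : (X 2 : MvPowerSeries (Fin 3) ℂ) ∈ IsLocalRing.maximalIdeal _ := by
  rw [IsLocalRing.mem_maximalIdeal, mem_nonunits_iff, isUnit_iff_constantCoeff]
  simp

lemma jacobian_mem : ∃ g, (X 2 : MvPowerSeries (Fin 3) ℂ) ^ 10 * (25 - 78125 * X 2 ^ 10) - g * dW 2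
    ∈ Ideal.span {dW 0, dW 1} := by
  let I : Ideal (MvPowerSeries (Fin 3) ℂ) := Ideal.span {dW 2, dW 0, dW 1}
  have e (i : Fin 3) : Ideal.Quotient.mk I (dW i) = 0 := by
    rw [Ideal.Quotient.eq_zero_iff_mem]
    apply Ideal.subset_span
    fin_cases i <;> simp
  have m5 : Ideal.Quotient.mk I 5 = 5 := map_ofNat _ 5
  have m25 : Ideal.Quotient.mk I 25 = 25 := map_ofNat _ 25
  have m78125 : Ideal.Quotient.mk I 78125 = 78125 := map_ofNat _ 78125
  have h := jacobian_rel (Ideal.Quotient.mk I (X 0)) (Ideal.Quotient.mk I (X 1))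
    (Ideal.Quotient.mk I (X 2)) (by simpa [dW, m5] using e 0) (by simpa [dW, m5] using e 1)
    (by simpa [dW, m5] using e 2)
  have hm : (X 2 : MvPowerSeries (Fin 3) ℂ) ^ 10 * (25 - 78125 * X 2 ^ 10) ∈ I := by
    rw [← Ideal.Quotient.eq_zero_iff_mem]
    simpa [m25, m78125] using h
  obtain ⟨g, w, hw, hg⟩ := Ideal.mem_span_insert.mp hm
  exact ⟨g, by rw [hg]; simpa using hw⟩

/-- The three partial derivatives of `W` form a regular sequence in the formal
power series ring `ℂ[[v₁,v₂,v₃]]`. -/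
theorem dW_isRegular_sequence :
    RingTheory.Sequence.IsRegular (MvPowerSeries (Fin 3) ℂ) [dW 0, dW 1, dW 2] := by
  apply RingTheory.Sequence.IsRegular.of_isWeaklyRegular_of_mem_maximalIdeal
  · intro r hr
    simp only [List.mem_cons, List.not_mem_nil, or_false] at hr
    rcases hr with rfl | rfl | rfl <;> exact dW_mem _
  have hperm : RingTheory.Sequence.IsWeaklyRegular (MvPowerSeries (Fin 3) ℂ)
      [dW 0, dW 1, X 2] := by
    refine IsLocalRing.isWeaklyRegular_of_perm_of_subset_maximalIdeal aux_regular
      (List.perm_append_comm (l₁ := [X 2]) (l₂ := [dW 0, dW 1])) ?_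
    intro r hr
    simp only [List.mem_cons, List.not_mem_nil, or_false] at hr
    rcases hr with rfl | rfl | rfl
    · exact X_mem
    · exact dW_mem _
    · exact dW_mem _
  rw [weaklyRegular_three_iff] at hperm ⊢
  obtain ⟨H0, H1, H2⟩ := hperm
  refine ⟨H0, H1, fun h hh => ?_⟩
  have hpow : ∀ n : ℕ, ∀ k, X 2 ^ n * k ∈ Ideal.span {dW 0, dW 1} →
      k ∈ Ideal.span {dW 0, dW 1} := by
    intro n
    induction n with
    | zero => intro k hk; simpa using hk
    | succ n ih =>
      intro k hk
      apply ih
      apply H2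
      rwa [← mul_assoc, ← pow_succ']
  obtain ⟨g, hg⟩ := jacobian_mem
  have hu : IsUnit (25 - 78125 * X 2 ^ 10 : MvPowerSeries (Fin 3) ℂ) := by
    have m25 : constantCoeff (25 : MvPowerSeries (Fin 3) ℂ) = 25 := map_ofNat _ 25
    rw [isUnit_iff_constantCoeff]
    simp [m25]
  have hm : X 2 ^ 10 * ((25 - 78125 * X 2 ^ 10) * h) ∈ Ideal.span {dW 0, dW 1} := by
    have := Ideal.add_mem _ (Ideal.mul_mem_right h _ hg) (Ideal.mul_mem_left _ g hh)
    convert this using 1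
    ring
  exact (Ideal.unit_mul_mem_iff_mem _ hu).mp (hpow _ _ hm)
end

section
/- For every index j in {1,2,3}, the power v_j⁶ lies in I·m² + m⁸, where I = (∂₁W, ∂₂W, ∂₃W) ⊂ ℂ[[v₁,v₂,v₃]] and m is the maximal ideal (v₁,v₂,v₃). -/
open MvPowerSeries

/-- The maximal ideal `m = (v₁,v₂,v₃)` of `ℂ[[v₁,v₂,v₃]]`. -/
noncomputable def mIdeal : Ideal (MvPowerSeries (Fin 3) ℂ) :=
  Ideal.span {X 0, X 1, X 2}

/-- The key identity: `5x⁶ = x²·d₁ - xy·d₂ - 5y⁴·d₃ + 25y⁴z⁴`. -/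
theorem sixth_power_mem_aux {R : Type*} [CommRing R] (J m : Ideal R) (x y z c : R)
    (hc : c * 5 = 1) (hx : x ∈ m) (hy : y ∈ m) (hz : z ∈ m)
    (h1 : -(y * z) + 5 * x ^ 4 ∈ J) (h2 : -(x * z) + 5 * y ^ 4 ∈ J)
    (h3 : -(x * y) + 5 * z ^ 4 ∈ J) : x ^ 6 ∈ J * m ^ 2 + m ^ 8 := by
  have e : x ^ 6 = c * ((-(y * z) + 5 * x ^ 4) * x ^ 2 - (-(x * z) + 5 * y ^ 4) * (x * y)
      - (5 * y ^ 2) * ((-(x * y) + 5 * z ^ 4) * y ^ 2)) + (c * 25) * (y ^ 4 * z ^ 4) := by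
    linear_combination (-x ^ 6) * hc
  rw [e]
  refine Submodule.add_mem_sup (Ideal.mul_mem_left _ _ (sub_mem (sub_mem ?_ ?_)
    (Ideal.mul_mem_left _ _ ?_))) (Ideal.mul_mem_left _ _ ?_)
  · exact Ideal.mul_mem_mul h1 (Ideal.pow_mem_pow hx 2)
  · exact Ideal.mul_mem_mul h2 (by rw [pow_two]; exact Ideal.mul_mem_mul hx hy)
  · exact Ideal.mul_mem_mul h3 (Ideal.pow_mem_pow hy 2)
  · rw [show (8 : ℕ) = 4 + 4 from rfl, pow_add]
    exact Ideal.mul_mem_mul (Ideal.pow_mem_pow hy 4) (Ideal.pow_mem_pow hz 4)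

/-- For every index `j`, the power `v_j⁶` lies in `I·m² + m⁸`. -/
theorem pure_sixth_power_mem_jacobian_mul_m2_add_m8 :
    ∀ j : Fin 3, X j ^ 6 ∈ JacobianIdeal * mIdeal ^ 2 + mIdeal ^ 8 := by
  have hc : (C (1 / 5 : ℂ) : MvPowerSeries (Fin 3) ℂ) * 5 = 1 := by
    rw [show (5 : MvPowerSeries (Fin 3) ℂ) = C (5 : ℂ) from (map_ofNat C 5).symm, ← map_mul]
    norm_num
  have x0 : X 0 ∈ mIdeal := Ideal.subset_span (by simp)
  have x1 : X 1 ∈ mIdeal := Ideal.subset_span (by simp)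
  have x2 : X 2 ∈ mIdeal := Ideal.subset_span (by simp)
  have d0 : -(X 1 * X 2) + 5 * X 0 ^ 4 ∈ JacobianIdeal :=
    Ideal.subset_span (Or.inl rfl)
  have d1 : -(X 0 * X 2) + 5 * X 1 ^ 4 ∈ JacobianIdeal :=
    Ideal.subset_span (Or.inr (Or.inl rfl))
  have d2 : -(X 0 * X 1) + 5 * X 2 ^ 4 ∈ JacobianIdeal :=
    Ideal.subset_span (Or.inr (Or.inr rfl))
  intro j
  fin_cases j
  · exact sixth_power_mem_aux _ _ _ _ _ _ hc x0 x1 x2 d0 d1 d2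
  · exact sixth_power_mem_aux _ _ _ _ _ _ hc x1 x0 x2 d1 d0 (by rwa [mul_comm _ (X 0)])
  · exact sixth_power_mem_aux _ _ _ _ _ _ hc x2 x0 x1 d2
      (by rwa [mul_comm _ (X 1)]) (by rwa [mul_comm _ (X 0)])
end

section
/- Let b₁, b₂, b₃ ∈ ℂ[[v₁,v₂,v₃]] be formal power series with b_k ∈ m⁴ for each k, satisfying b_i · ∂_jW = b_j · ∂_iW for all i, j ∈ {1,2,3}. Then there exists a unique c ∈ ℂ[[v₁,v₂,v₃]] such that b_k = c · ∂_kW for all k, and moreover c ∈ m². -/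
open MvPowerSeries

noncomputable def restr (s : Fin 3) (f : MvPowerSeries (Fin 3) ℂ) : MvPowerSeries (Fin 3) ℂ :=
  fun d => if d s = 0 then coeff d f else 0

lemma coeff_restr (s : Fin 3) (f : MvPowerSeries (Fin 3) ℂ) (d : Fin 3 →₀ ℕ) :
    coeff d (restr s f) = if d s = 0 then coeff d f else 0 := rfl

lemma X_dvd_sub_restr (s : Fin 3) (f : MvPowerSeries (Fin 3) ℂ) : X s ∣ f - restr s f := by
  rw [X_dvd_iff]
  intro d hd
  simp [coeff_restr, hd]

lemma le_order_restr (s : Fin 3) (f : MvPowerSeries (Fin 3) ℂ) (n : ℕ) (h : (n : ℕ∞) ≤ f.order) :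
    (n : ℕ∞) ≤ (restr s f).order := by
  apply nat_le_order
  intro d hd
  rw [coeff_restr, coeff_of_lt_order (lt_of_lt_of_le (by exact_mod_cast hd) h), ite_self]

lemma le_order_sub_restr (s : Fin 3) (f : MvPowerSeries (Fin 3) ℂ) (n : ℕ)
    (h : (n : ℕ∞) ≤ f.order) : (n : ℕ∞) ≤ (f - restr s f).order := by
  apply nat_le_order
  intro d hd
  rw [map_sub, coeff_restr, coeff_of_lt_order (lt_of_lt_of_le (by exact_mod_cast hd) h), ite_self,
    sub_zero]

lemma order_X_eq (s : Fin 3) : (X s : MvPowerSeries (Fin 3) ℂ).order = 1 := by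
  rw [X_def, order_monomial_of_ne_zero one_ne_zero]
  simp

lemma le_order_of_X_mul (s : Fin 3) (a : MvPowerSeries (Fin 3) ℂ) (n : ℕ)
    (h : ((n + 1 : ℕ) : ℕ∞) ≤ (X s * a).order) : (n : ℕ∞) ≤ a.order := by
  rw [order_mul, order_X_eq, add_comm (1 : ℕ∞)] at h
  push_cast at h
  exact (ENat.add_le_add_iff_right (by simp)).1 h

lemma X_mem_s6 (s : Fin 3) : X s ∈ mIdeal := by
  apply Ideal.subset_span
  fin_cases s <;> simp

lemma mem_pow_of_le_order (n : ℕ) : ∀ f : MvPowerSeries (Fin 3) ℂ, (n : ℕ∞) ≤ f.order →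
    f ∈ mIdeal ^ n := by
  induction n with
  | zero => intro f _; simp
  | succ n ih =>
    intro f hf
    obtain ⟨a, ha⟩ := X_dvd_sub_restr 0 f
    obtain ⟨b, hb⟩ := X_dvd_sub_restr 1 (restr 0 f)
    have hr := le_order_restr 0 f _ hf
    have hA := le_order_sub_restr 0 f _ hf
    have hB := le_order_sub_restr 1 _ _ hr
    have hr2 := le_order_restr 1 _ _ hr
    rw [ha] at hA
    rw [hb] at hB
    have h1 := ih a (le_order_of_X_mul _ _ _ hA)
    have h2 := ih b (le_order_of_X_mul _ _ _ hB)
    have h3 : X 2 ^ (n + 1) ∣ restr 1 (restr 0 f) := by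
      rw [X_pow_dvd_iff]
      intro d hd
      rw [coeff_restr, coeff_restr]
      split_ifs with h1 h0
      · apply coeff_of_lt_order (lt_of_lt_of_le _ hf)
        have : d.degree = d 2 := by
          rw [Finsupp.degree_eq_sum, Fin.sum_univ_three, h1, h0]; simp
        rw [this]
        exact_mod_cast hd
      · rfl
      · rfl
    have e : f = X 0 * a + X 1 * b + restr 1 (restr 0 f) := by
      rw [← ha, ← hb]; ring
    rw [e]
    refine Ideal.add_mem _ (Ideal.add_mem _ ?_ ?_) ?_
    · rw [pow_succ']; exact Ideal.mul_mem_mul (X_mem_s6 0) h1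
    · rw [pow_succ']; exact Ideal.mul_mem_mul (X_mem_s6 1) h2
    · exact Ideal.mem_of_dvd _ h3 (Ideal.pow_mem_pow (X_mem_s6 2) _)

lemma one_le_order_of_mem (f : MvPowerSeries (Fin 3) ℂ) (hf : f ∈ mIdeal) : 1 ≤ f.order := by
  rw [one_le_order_iff_constCoeff_eq_zero, ← RingHom.mem_ker]
  refine (Ideal.span_le.2 ?_ : mIdeal ≤ RingHom.ker (constantCoeff (σ := Fin 3) (R := ℂ))) hf
  rintro x (rfl | rfl | rfl) <;> simp [RingHom.mem_ker]

lemma le_order_of_mem (n : ℕ) : ∀ f : MvPowerSeries (Fin 3) ℂ, f ∈ mIdeal ^ n →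
    (n : ℕ∞) ≤ f.order := by
  induction n with
  | zero => intro f _; simp
  | succ n ih =>
    intro f hf
    rw [pow_succ] at hf
    induction hf using Submodule.mul_induction_on' with
    | mem_mul_mem x hx y hy =>
      rw [order_mul]
      push_cast
      exact add_le_add (ih x hx) (one_le_order_of_mem y hy)
    | add x _ y _ hx hy => exact le_trans (le_min hx hy) min_order_le_add

/-- one step of the reduction modulo `X 2` -/
lemma step (g h : MvPowerSeries (Fin 3) ℂ) (H : dW 0 * g = dW 1 * h) :
    ∃ u g' h', h = dW 0 * u + X 2 * h' ∧ dW 0 * g' = dW 1 * h' := by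
  have h0 : dW 0 = - (X 1 * X 2) + 5 * X 0 ^ 4 := rfl
  have h1 : dW 1 = - (X 0 * X 2) + 5 * X 1 ^ 4 := rfl
  have h5 : (C (5⁻¹ : ℂ) : MvPowerSeries (Fin 3) ℂ) * 5 = 1 := by
    have : (5 : MvPowerSeries (Fin 3) ℂ) = C (5 : ℂ) := (map_ofNat C 5).symm
    rw [this, ← map_mul]; norm_num
  set i5 : MvPowerSeries (Fin 3) ℂ := C (5⁻¹ : ℂ)
  -- modulo `X 2`
  have H1 : X 1 ^ 4 * h = X 0 ^ 4 * g + X 2 * (i5 * (X 0 * h - X 1 * g)) := by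
    rw [h0, h1] at H
    linear_combination (X 0 ^ 4 * g - X 1 ^ 4 * h) * h5 - i5 * H
  have hdiv : X 0 ^ 4 ∣ restr 2 h := by
    rw [X_pow_dvd_iff]
    intro d hd
    rw [coeff_restr]
    split_ifs with hz
    · have e : coeff (Finsupp.single 1 4 + d) (X 1 ^ 4 * h) = coeff d h := by
        rw [X_pow_eq, coeff_add_monomial_mul, one_mul]
      rw [← e, H1, map_add,
        X_pow_dvd_iff.1 (Dvd.intro _ rfl : X 0 ^ 4 ∣ X 0 ^ 4 * g) _ (by simpa using hd),
        X_dvd_iff.1 (Dvd.intro _ rfl : X 2 ∣ X 2 * (i5 * (X 0 * h - X 1 * g))) _ (by simpa using hz),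
        add_zero]
    · rfl
  obtain ⟨u, hu⟩ := hdiv
  obtain ⟨v, hv⟩ := X_dvd_sub_restr 2 h
  have E : h = dW 0 * (i5 * u) + X 2 * (v + X 1 * (i5 * u)) := by
    rw [h0]
    linear_combination hv + hu - X 0 ^ 4 * u * h5
  set h' := v + X 1 * (i5 * u)
  have E2 : dW 0 * (g - dW 1 * (i5 * u)) = X 2 * (dW 1 * h') := by
    linear_combination H + dW 1 * E
  have hg : X 2 ∣ g - dW 1 * (i5 * u) := by
    set p := g - dW 1 * (i5 * u)
    have E3 : X 0 ^ 4 * p = X 2 * (i5 * (dW 1 * h' + X 1 * p)) := by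
      rw [h0] at E2
      linear_combination i5 * E2 - X 0 ^ 4 * p * h5
    rw [X_dvd_iff]
    intro d hd
    have e : coeff (Finsupp.single 0 4 + d) (X 0 ^ 4 * p) = coeff d p := by
      rw [X_pow_eq, coeff_add_monomial_mul, one_mul]
    rw [← e, E3]
    exact X_dvd_iff.1 (Dvd.intro _ rfl) _ (by simpa using hd)
  obtain ⟨g', hg'⟩ := hg
  refine ⟨i5 * u, g', h', E, ?_⟩
  have hX : (X 2 : MvPowerSeries (Fin 3) ℂ) ≠ 0 := by
    intro h; have := order_X_eq 2; rw [h] at this; simp at this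
  apply mul_left_cancel₀ hX
  rw [← E2, hg']; ring

lemma iter (n : ℕ) : ∀ (g h : MvPowerSeries (Fin 3) ℂ), dW 0 * g = dW 1 * h →
    ∃ u h', h = dW 0 * u + X 2 ^ n * h' := by
  induction n with
  | zero => intro g h _; exact ⟨0, h, by simp⟩
  | succ n ih =>
    intro g h H
    obtain ⟨u, g', h', E, H'⟩ := step g h H
    obtain ⟨u', h'', E'⟩ := ih g' h' H'
    exact ⟨u + X 2 * u', h'', by rw [E, E']; ring⟩

lemma dvd_of_rel (g h : MvPowerSeries (Fin 3) ℂ) (H : dW 0 * g = dW 1 * h) : dW 0 ∣ h := by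
  rw [← Ideal.mem_span_singleton, ← Ideal.Quotient.eq_zero_iff_mem, ← Submodule.mem_bot
    (R := MvPowerSeries (Fin 3) ℂ)]
  have hI : Ideal.span {(X 2 : MvPowerSeries (Fin 3) ℂ)} ≠ ⊤ := by
    rw [Ne, Ideal.span_singleton_eq_top]
    intro hu
    have := hu.map (constantCoeff (σ := Fin 3) (R := ℂ))
    simp at this
  rw [← Ideal.iInf_pow_smul_eq_bot_of_isLocalRing _ hI, Submodule.mem_iInf]
  intro n
  obtain ⟨u, h', E⟩ := iter n g h H
  have : Ideal.Quotient.mk (Ideal.span {dW 0}) h =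
      (X 2 ^ n : MvPowerSeries (Fin 3) ℂ) • Ideal.Quotient.mk (Ideal.span {dW 0}) h' := by
    change _ = Ideal.Quotient.mk (Ideal.span {dW 0}) (X 2 ^ n * h')
    rw [Ideal.Quotient.eq, Ideal.mem_span_singleton]
    exact ⟨u, by rw [E]; ring⟩
  rw [this]
  exact Submodule.smul_mem_smul (Ideal.pow_mem_pow (Ideal.mem_span_singleton_self _) n) trivial

lemma order_dW_zero : (dW 0).order ≤ 2 := by
  have h : coeff (Finsupp.single 1 1 + Finsupp.single 2 1) (dW 0) ≠ 0 := by
    have h0 : dW 0 = - (X 1 * X 2) + X 0 ^ 4 * 5 := by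
      rw [mul_comm (X 0 ^ 4)]; rfl
    rw [h0, map_add, X_pow_dvd_iff.1 (Dvd.intro _ rfl : (X 0 : MvPowerSeries (Fin 3) ℂ) ^ 4 ∣ X 0 ^ 4 * 5) _ (by simp), map_neg]
    nth_rw 1 [X_def]
    rw [coeff_add_monomial_mul, X_def, coeff_monomial_same]
    simp
  refine (order_le h).trans ?_
  simp only [map_add, Finsupp.degree_single]
  norm_num

/-- Exactness of the Koszul complex of `dW` in degree two, with control of the
filtration by order of vanishing: if `b₁, b₂, b₃ ∈ m⁴` satisfy
`bᵢ·∂ⱼW = bⱼ·∂ᵢW` for all `i,j`, then there is a unique `c` with `b_k = c·∂_kW`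
for all `k`, and moreover this `c` lies in `m²`. -/
theorem koszul_degree_two_exactness
    (b : Fin 3 → MvPowerSeries (Fin 3) ℂ)
    (hb : ∀ k, b k ∈ mIdeal ^ 4)
    (hcocycle : ∀ i j : Fin 3, b i * dW j = b j * dW i) :
    (∃! c : MvPowerSeries (Fin 3) ℂ, ∀ k, b k = c * dW k) ∧
    (∀ c : MvPowerSeries (Fin 3) ℂ, (∀ k, b k = c * dW k) → c ∈ mIdeal ^ 2) := by
  have hne : dW 0 ≠ 0 := by
    intro h; have := order_dW_zero; rw [h] at this; simp at this
  refine ⟨?_, ?_⟩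
  · obtain ⟨c, hc⟩ := dvd_of_rel (b 1) (b 0) (by rw [mul_comm, ← hcocycle 0 1, mul_comm])
    refine ⟨c, ?_, ?_⟩
    · intro k
      apply mul_right_cancel₀ hne
      rw [hcocycle k 0, hc]; ring
    · intro c' hc'
      apply mul_right_cancel₀ hne
      rw [← hc' 0, hc, mul_comm]
  · intro c hc
    apply mem_pow_of_le_order
    have h4 := le_order_of_mem 4 _ (hb 0)
    rw [hc 0, order_mul] at h4
    have h := h4.trans (add_le_add_right order_dW_zero c.order)
    have e : ((4 : ℕ) : ℕ∞) = (2 : ℕ) + 2 := by norm_num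
    rw [e] at h
    exact (ENat.add_le_add_iff_right (by simp)).1 h
end

section
/- Every homogeneous polynomial of degree 5 in ℂ[v₁,v₂,v₃] that is invariant under G is a ℂ-linear combination of v₁⁵, v₂⁵, and v₃⁵. -/
open MvPolynomial

/-- The group `G ≅ (ℤ/5)²` of diagonal matrices `diag(g₀,g₁,g₂)` whose entries are
fifth roots of unity and whose determinant is `1`, recorded by its diagonal entries. -/
def Gset : Set (Fin 3 → ℂ) :=
  {g | (∀ i, g i ^ 5 = 1) ∧ g 0 * g 1 * g 2 = 1}

theorem coeff_scale (g : Fin 3 → ℂ) (f : MvPolynomial (Fin 3) ℂ) (m : Fin 3 →₀ ℕ) :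
    coeff m (aeval (fun i => MvPolynomial.C (g i) * X i) f : MvPolynomial (Fin 3) ℂ)
      = (g 0 ^ m 0 * g 1 ^ m 1 * g 2 ^ m 2) * coeff m f := by
  induction f using MvPolynomial.induction_on' with
  | monomial u a =>
    have h : (aeval (fun i => MvPolynomial.C (g i) * X i) (monomial u a) :
        MvPolynomial (Fin 3) ℂ)
        = MvPolynomial.C (g 0 ^ u 0 * g 1 ^ u 1 * g 2 ^ u 2) * monomial u a := by
      rw [aeval_monomial, monomial_eq, Finsupp.prod_fintype _ _ (by simp),
        Finsupp.prod_fintype _ _ (by simp)]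
      simp only [Fin.prod_univ_three, mul_pow, map_mul, map_pow, algebraMap_eq]
      ring
    rw [h, coeff_C_mul, coeff_monomial]
    split_ifs with hu
    · rw [hu]
    · simp
  | add p q hp hq => rw [map_add, coeff_add, coeff_add, hp, hq]; ring

/-- Every homogeneous polynomial of degree `5` in `ℂ[v₁,v₂,v₃]` that is invariant
under `G` (i.e. unchanged under every substitution `v_i ↦ g_i v_i` with `g ∈ G`)
is a linear combination of `v₁⁵`, `v₂⁵` and `v₃⁵`. -/
theorem degree_five_invariants
    (f : MvPolynomial (Fin 3) ℂ)
    (hf : f.IsHomogeneous 5)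
    (hinv : ∀ g ∈ Gset, aeval (fun i => MvPolynomial.C (g i) * X i) f = f) :
    ∃ c : Fin 3 → ℂ, f = c 0 • X 0 ^ 5 + c 1 • X 1 ^ 5 + c 2 • X 2 ^ 5 := by
  obtain ⟨z, hz⟩ : ∃ z : ℂ, IsPrimitiveRoot z 5 :=
    ⟨_, Complex.isPrimitiveRoot_exp 5 (by norm_num)⟩
  have hz5 : z ^ 5 = 1 := hz.pow_eq_one
  have key : ∀ m : Fin 3 →₀ ℕ, coeff m f ≠ 0 →
      m = Finsupp.single 0 5 ∨ m = Finsupp.single 1 5 ∨ m = Finsupp.single 2 5 := by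
    intro m hm
    have hdeg : m 0 + m 1 + m 2 = 5 := by
      have h := hf hm
      rw [Finsupp.weight_apply, Finsupp.sum_fintype _ _ (by simp)] at h
      simpa [Fin.sum_univ_three] using h
    have hz20 : (z ^ 4) ^ 5 = 1 := by rw [← pow_mul, mul_comm, pow_mul, hz5, one_pow]
    have h1 : 5 ∣ m 0 + 4 * m 1 := by
      have h := coeff_scale ![z, z ^ 4, 1] f m
      rw [hinv _ ⟨by intro i; fin_cases i <;> simp [hz5, hz20],
        by simp; rw [← hz5]; ring⟩] at h
      have h' := mul_right_cancel₀ hm ((one_mul _).trans h)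
      apply hz.dvd_of_pow_eq_one
      rw [h', pow_add, pow_mul]
      simp
    have h2 : 5 ∣ m 0 + 4 * m 2 := by
      have h := coeff_scale ![z, 1, z ^ 4] f m
      rw [hinv _ ⟨by intro i; fin_cases i <;> simp [hz5, hz20],
        by simp; rw [← hz5]; ring⟩] at h
      have h' := mul_right_cancel₀ hm ((one_mul _).trans h)
      apply hz.dvd_of_pow_eq_one
      rw [h', pow_add, pow_mul]
      simp
    have h3 : (m 0 = 5 ∧ m 1 = 0 ∧ m 2 = 0) ∨ (m 0 = 0 ∧ m 1 = 5 ∧ m 2 = 0) ∨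
        (m 0 = 0 ∧ m 1 = 0 ∧ m 2 = 5) := by omega
    rcases h3 with ⟨a, b, c⟩ | ⟨a, b, c⟩ | ⟨a, b, c⟩
    · left; ext i; fin_cases i <;> simp [a, b, c]
    · right; left; ext i; fin_cases i <;> simp [a, b, c]
    · right; right; ext i; fin_cases i <;> simp [a, b, c]
  refine ⟨fun i => coeff (Finsupp.single i 5) f, ?_⟩
  ext m
  simp only [coeff_add, coeff_smul, coeff_X_pow, smul_eq_mul]
  by_cases hm : coeff m f = 0
  · rw [hm]
    have h : ∀ i : Fin 3, coeff (Finsupp.single i 5) f *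
        (if Finsupp.single i 5 = m then (1 : ℂ) else 0) = 0 := by
      intro i
      split_ifs with hi
      · rw [hi, hm, zero_mul]
      · rw [mul_zero]
    rw [h, h, h]; simp
  · rcases key m hm with rfl | rfl | rfl <;> simp [Finsupp.single_left_inj]
end

section
/- The space of G-invariant elements of Sym⁴(V^∨) ⊗ Λ²(V), where V = ℂ³ is the standard representation of G, is 3-dimensional: it is spanned by v₁⁴ ⊗ ξ₂∧ξ₃, v₂⁴ ⊗ ξ₃∧ξ₁, and v₃⁴ ⊗ ξ₁∧ξ₂, and these three elements are linearly independent. -/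
set_option synthInstance.maxHeartbeats 1000000
set_option maxHeartbeats 1000000

open MvPolynomial TensorProduct

noncomputable section

/-- `V = ℂ³`, the standard representation of `G`. -/
abbrev V := Fin 3 → ℂ

/-- The ambient space `ℂ[v₁,v₂,v₃] ⊗ Λ(V)`; the symmetric powers `Symⁱ(V^∨)` are the
homogeneous components of the polynomial ring. -/
abbrev TensorSpace := MvPolynomial (Fin 3) ℂ ⊗[ℂ] ExteriorAlgebra ℂ V

/-- The diagonal matrix `g` as a linear endomorphism of `V`. -/
def diagMap (g : Fin 3 → ℂ) : V →ₗ[ℂ] V :=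
  LinearMap.pi fun i => g i • LinearMap.proj i

/-- The action of the diagonal matrix `g` on `Sym(V^∨) ⊗ Λ(V)`: on polynomial
functions on `V` by the dual (contragredient) action `(g·f)(v) = f(g⁻¹·v)`, i.e. the
substitution `v_i ↦ g_i⁻¹ v_i`, and on the exterior algebra functorially. -/
def tensorAct (g : Fin 3 → ℂ) : TensorSpace →ₗ[ℂ] TensorSpace :=
  TensorProduct.map
    (aeval fun i => MvPolynomial.C (g i)⁻¹ * MvPolynomial.X i).toLinearMap
    (ExteriorAlgebra.map (diagMap g)).toLinearMap

/-- The subspace `Sym⁴(V^∨) ⊗ Λ²(V)` of `ℂ[v₁,v₂,v₃] ⊗ Λ(V)`. -/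
def Sym4Lambda2 : Submodule ℂ TensorSpace :=
  Submodule.map₂ (TensorProduct.mk ℂ _ _)
    (homogeneousSubmodule (Fin 3) ℂ 4)
    (⋀[ℂ]^2 V : Submodule ℂ (ExteriorAlgebra ℂ V))

/-- The standard basis vector `ξ_k ∈ V` inside the exterior algebra. -/
def xi (k : Fin 3) : ExteriorAlgebra ℂ V :=
  ExteriorAlgebra.ι ℂ (Pi.single k 1)

/-- The three invariant elements `v₁⁴ ⊗ ξ₂∧ξ₃`, `v₂⁴ ⊗ ξ₃∧ξ₁`, `v₃⁴ ⊗ ξ₁∧ξ₂`. -/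
def invBasis : Fin 3 → TensorSpace :=
  ![ (MvPolynomial.X 0 ^ 4) ⊗ₜ (xi 1 * xi 2),
     (MvPolynomial.X 1 ^ 4) ⊗ₜ (xi 2 * xi 0),
     (MvPolynomial.X 2 ^ 4) ⊗ₜ (xi 0 * xi 1) ]

theorem xi_sq (i : Fin 3) : xi i * xi i = 0 := ExteriorAlgebra.ι_sq_zero _

theorem xi_swap (i j : Fin 3) : xi i * xi j = - (xi j * xi i) := by
  have h := ExteriorAlgebra.ι_add_mul_swap (R := ℂ) (Pi.single i 1 : V) (Pi.single j 1 : V)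
  exact eq_neg_of_add_eq_zero_left h

theorem xi_mul_ne (i j : Fin 3) (h : i ≠ j) : xi i * xi j ≠ 0 := by
  intro h0
  have h1 := congrArg (CliffordAlgebra.contractLeft (Q := (0 : QuadraticForm ℂ V))
    (LinearMap.proj i : V →ₗ[ℂ] ℂ)) h0
  unfold xi ExteriorAlgebra.ι at h1
  rw [CliffordAlgebra.contractLeft_ι_mul, CliffordAlgebra.contractLeft_ι] at h1
  simp [h] at h1

theorem act_gen (g : Fin 3 → ℂ) (a : Fin 3 →₀ ℕ) (i j : Fin 3) :
    tensorAct g ((monomial a (1:ℂ)) ⊗ₜ (xi i * xi j)) =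
      (((g 0)⁻¹ ^ a 0 * (g 1)⁻¹ ^ a 1 * (g 2)⁻¹ ^ a 2) * (g i * g j)) •
        ((monomial a (1:ℂ)) ⊗ₜ[ℂ] (xi i * xi j)) := by
  have hx : ∀ k, ExteriorAlgebra.map (diagMap g) (xi k) = g k • xi k := by
    intro k
    unfold xi
    rw [ExteriorAlgebra.map_apply_ι, ← map_smul]
    congr 1
    ext m
    by_cases hm : m = k
    · subst hm; simp [diagMap]
    · simp [diagMap, hm]
  have hp : (aeval fun i => MvPolynomial.C (g i)⁻¹ * MvPolynomial.X i) (monomial a (1:ℂ))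
      = ((g 0)⁻¹ ^ a 0 * (g 1)⁻¹ ^ a 1 * (g 2)⁻¹ ^ a 2) • (monomial a (1:ℂ)) := by
    rw [aeval_monomial, monomial_eq, Finsupp.prod_fintype _ _ (by simp),
      Finsupp.prod_fintype _ _ (by simp), Fin.prod_univ_three, Fin.prod_univ_three]
    simp only [mul_pow, MvPolynomial.smul_eq_C_mul, map_mul, map_pow, map_one]
    ring
  unfold tensorAct
  rw [TensorProduct.map_tmul]
  simp only [AlgHom.toLinearMap_apply, map_mul, hx, hp]
  rw [smul_mul_smul_comm, TensorProduct.smul_tmul_smul]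

def gens : Set TensorSpace :=
  {t | ∃ (a : Fin 3 →₀ ℕ) (i j : Fin 3), a 0 + a 1 + a 2 = 4 ∧
    t = (monomial a (1:ℂ)) ⊗ₜ (xi i * xi j)}

open scoped Pointwise in
theorem S_le : Sym4Lambda2 ≤ Submodule.span ℂ gens := by
  have h1 : (homogeneousSubmodule (Fin 3) ℂ 4) ≤
      Submodule.span ℂ (Set.image (fun a => monomial a (1:ℂ)) {a : Fin 3 →₀ ℕ | a 0 + a 1 + a 2 = 4}) := by
    intro p hp
    rw [mem_homogeneousSubmodule] at hp
    rw [p.as_sum]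
    refine Submodule.sum_mem _ fun a ha => ?_
    have := hp (mem_support_iff.1 ha)
    rw [← mul_one (coeff a p), ← smul_eq_mul, ← smul_monomial]
    refine Submodule.smul_mem _ _ (Submodule.subset_span ⟨a, ?_, rfl⟩)
    rw [Finsupp.weight_apply, Finsupp.sum_fintype _ _ (by simp), Fin.sum_univ_three] at this
    simpa using this
  have h2 : LinearMap.range (ExteriorAlgebra.ι ℂ : V →ₗ[ℂ] _) ≤ Submodule.span ℂ (Set.range xi) := by
    rintro _ ⟨v, rfl⟩
    have : v = ∑ i, v i • (Pi.single i (1:ℂ) : V) := by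
      ext k
      simp [Finset.sum_apply, Pi.single_apply]
    rw [this, map_sum]
    refine Submodule.sum_mem _ fun i _ => ?_
    rw [map_smul]
    exact Submodule.smul_mem _ _ (Submodule.subset_span ⟨i, rfl⟩)
  have h3 : (⋀[ℂ]^2 V : Submodule ℂ (ExteriorAlgebra ℂ V)) ≤
      Submodule.span ℂ (Set.range xi * Set.range xi) := by
    change LinearMap.range (ExteriorAlgebra.ι ℂ : V →ₗ[ℂ] _) ^ 2 ≤ _
    rw [pow_two, ← Submodule.span_mul_span]
    exact mul_le_mul' h2 h2
  unfold Sym4Lambda2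
  refine (Submodule.map₂_le_map₂ h1 h3).trans ?_
  rw [Submodule.map₂_span_span]
  refine Submodule.span_mono ?_
  rintro _ ⟨_, ⟨a, ha, rfl⟩, _, ⟨_, ⟨i, rfl⟩, _, ⟨j, rfl⟩, rfl⟩, rfl⟩
  exact ⟨a, i, j, ha, rfl⟩

def gg (z : ℂ) (k l : ℕ) : Fin 3 → ℂ := ![z ^ k, z ^ l, z ^ (4 * (k + l))]

theorem gg_mem (z : ℂ) (hz : z ^ 5 = 1) (k l : ℕ) : gg z k l ∈ Gset := by
  have h : ∀ n, (z ^ n) ^ 5 = 1 := fun n => by rw [← pow_mul, mul_comm, pow_mul, hz, one_pow]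
  refine ⟨fun i => ?_, ?_⟩
  · fin_cases i <;> simp [gg, h]
  · simp only [gg, Matrix.cons_val]
    rw [← pow_add, ← pow_add, show k + l + 4 * (k + l) = 5 * (k + l) by ring, pow_mul, hz, one_pow]

/-- The averaging operator over the group. -/
def avg (z : ℂ) : TensorSpace →ₗ[ℂ] TensorSpace :=
  (25⁻¹ : ℂ) • ∑ k ∈ Finset.range 5, ∑ l ∈ Finset.range 5, tensorAct (gg z k l)

theorem avg_inv (z : ℂ) (hz : z ^ 5 = 1) (x : TensorSpace)
    (hx : ∀ g ∈ Gset, tensorAct g x = x) : avg z x = x := by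
  simp only [avg, LinearMap.smul_apply, LinearMap.sum_apply, hx _ (gg_mem z hz _ _),
    Finset.sum_const, Finset.card_range]
  module

theorem geom_zero (z : ℂ) (hz : IsPrimitiveRoot z 5) (A : ℕ) (hA : ¬ 5 ∣ A) :
    ∑ k ∈ Finset.range 5, (z ^ A) ^ k = 0 := by
  have h1 : z ^ A ≠ 1 := fun h => hA (hz.dvd_of_pow_eq_one A h)
  rw [geom_sum_eq h1, ← pow_mul, mul_comm, pow_mul, hz.pow_eq_one]
  simp

theorem avg_zero (z : ℂ) (hz : IsPrimitiveRoot z 5) (t : TensorSpace) (A B : ℕ)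
    (ht : ∀ k l, tensorAct (gg z k l) t = ((z ^ A) ^ k * (z ^ B) ^ l) • t)
    (h : ¬ (5 ∣ A ∧ 5 ∣ B)) : avg z t = 0 := by
  simp only [avg, LinearMap.smul_apply, LinearMap.sum_apply, ht, ← Finset.sum_smul,
    ← Finset.mul_sum, ← Finset.sum_mul]
  by_cases hA : 5 ∣ A
  · rw [geom_zero z hz B (fun hB => h ⟨hA, hB⟩)]; simp
  · rw [geom_zero z hz A hA]; simp

/-- exponents of the `i`-th diagonal entry of `gg` -/
def ex (i : Fin 3) : ℕ := ![1, 0, 4] i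
def ey (i : Fin 3) : ℕ := ![0, 1, 4] i

theorem gg_apply (z : ℂ) (k l : ℕ) (i : Fin 3) : gg z k l i = z ^ (ex i * k + ey i * l) := by
  fin_cases i <;> simp [gg, ex, ey, mul_add]

theorem gen_act (z : ℂ) (hz : z ^ 5 = 1) (a : Fin 3 →₀ ℕ) (i j : Fin 3) (k l : ℕ) :
    tensorAct (gg z k l) ((monomial a (1:ℂ)) ⊗ₜ (xi i * xi j)) =
      ((z ^ (4 * a 0 + 16 * a 2 + ex i + ex j)) ^ k *
        (z ^ (4 * a 1 + 16 * a 2 + ey i + ey j)) ^ l) •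
        ((monomial a (1:ℂ)) ⊗ₜ[ℂ] (xi i * xi j)) := by
  have hi : ∀ n, (z ^ n)⁻¹ = z ^ (4 * n) := fun n => by
    apply inv_eq_of_mul_eq_one_left
    rw [← pow_add, show 4 * n + n = 5 * n by ring, pow_mul, hz, one_pow]
  rw [act_gen]
  congr 1
  simp only [gg_apply, hi, ← pow_mul, ← pow_add]
  congr 1
  simp [ex, ey]
  ring

theorem mono_eq (a : Fin 3 →₀ ℕ) (m : Fin 3) (h : ∀ k, a k = if k = m then 4 else 0) :
    monomial a (1:ℂ) = X m ^ 4 := by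
  rw [X_pow_eq_monomial]
  congr 2
  ext k
  rw [h, Finsupp.single_apply]
  simp [eq_comm]

theorem inv_basis (g : Fin 3 → ℂ) (hg : g ∈ Gset) (m : Fin 3) :
    tensorAct g (invBasis m) = invBasis m := by
  obtain ⟨h5, h1⟩ := hg
  have h0 : ∀ i, g i ≠ 0 := fun i h => by simpa [h] using h5 i
  have a0 := h0 0
  have a1 := h0 1
  have a2 := h0 2
  have b0 := h5 0
  have b1 := h5 1
  have b2 := h5 2
  fin_cases m
  · simp only [invBasis, Fin.zero_eta, Matrix.cons_val, X_pow_eq_monomial, act_gen]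
    convert one_smul ℂ _
    simp
    field_simp
    linear_combination g 0 ^ 4 * h1 - g 1 * g 2 * b0
  · simp only [invBasis, Fin.mk_one, Matrix.cons_val, X_pow_eq_monomial, act_gen]
    convert one_smul ℂ _
    simp
    field_simp
    linear_combination g 1 ^ 4 * h1 - g 2 * g 0 * b1
  · simp only [invBasis, Fin.reduceFinMk, Matrix.cons_val, X_pow_eq_monomial, act_gen]
    convert one_smul ℂ _
    simp
    field_simp
    linear_combination g 2 ^ 4 * h1 - g 0 * g 1 * b2

theorem avg_pos (z : ℂ) (hz : IsPrimitiveRoot z 5) (a : Fin 3 →₀ ℕ) (i j m : Fin 3)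
    (hm : invBasis m = (X m ^ 4) ⊗ₜ (xi i * xi j))
    (h : (5 ∣ 4 * a 0 + 16 * a 2 + ex i + ex j ∧ 5 ∣ 4 * a 1 + 16 * a 2 + ey i + ey j) →
      ∀ k, a k = if k = m then 4 else 0) :
    avg z ((monomial a (1:ℂ)) ⊗ₜ (xi i * xi j)) ∈ Submodule.span ℂ (Set.range invBasis) := by
  by_cases hd : 5 ∣ 4 * a 0 + 16 * a 2 + ex i + ex j ∧ 5 ∣ 4 * a 1 + 16 * a 2 + ey i + ey j
  · rw [mono_eq a m (h hd), ← hm,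
      avg_inv z hz.pow_eq_one _ fun g hg => inv_basis g hg m]
    exact Submodule.subset_span ⟨m, rfl⟩
  · rw [avg_zero z hz _ _ _ (gen_act z hz.pow_eq_one a i j) hd]
    exact Submodule.zero_mem _

theorem avg_gen (z : ℂ) (hz : IsPrimitiveRoot z 5) (t : TensorSpace) (ht : t ∈ gens) :
    avg z t ∈ Submodule.span ℂ (Set.range invBasis) := by
  obtain ⟨a, i, j, ha, rfl⟩ := ht
  have p0 := avg_pos z hz a 1 2 0 rfl (by
    rw [Fin.forall_fin_succ, Fin.forall_fin_two]; simp [ex, ey]; omega)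
  have p1 := avg_pos z hz a 2 0 1 rfl (by
    rw [Fin.forall_fin_succ, Fin.forall_fin_two]; simp [ex, ey]; omega)
  have p2 := avg_pos z hz a 0 1 2 rfl (by
    rw [Fin.forall_fin_succ, Fin.forall_fin_two]; simp [ex, ey]; omega)
  have sw : ∀ i j : Fin 3,
      avg z ((monomial a (1:ℂ)) ⊗ₜ (xi i * xi j)) ∈ Submodule.span ℂ (Set.range invBasis) →
      avg z ((monomial a (1:ℂ)) ⊗ₜ (xi j * xi i)) ∈ Submodule.span ℂ (Set.range invBasis) := by
    intro i j h
    rw [xi_swap j i, TensorProduct.tmul_neg, map_neg]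
    exact Submodule.neg_mem _ h
  have d : ∀ i : Fin 3,
      avg z ((monomial a (1:ℂ)) ⊗ₜ (xi i * xi i)) ∈ Submodule.span ℂ (Set.range invBasis) := by
    intro i
    rw [xi_sq, TensorProduct.tmul_zero, map_zero]
    exact Submodule.zero_mem _
  fin_cases i <;> fin_cases j
  · exact d 0
  · exact p2
  · exact sw _ _ p1
  · exact sw _ _ p2
  · exact d 1
  · exact p0
  · exact p1
  · exact sw _ _ p0
  · exact d 2

theorem linInd : LinearIndependent ℂ invBasis := by
  rw [Fintype.linearIndependent_iff]
  intro c hc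
  have key : ∀ m : Fin 3, (TensorProduct.lid ℂ (ExteriorAlgebra ℂ V))
      (LinearMap.rTensor _ (MvPolynomial.lcoeff ℂ (Finsupp.single m 4)) (∑ i, c i • invBasis i)) = 0 := by
    intro m; rw [hc]; simp
  intro m
  have k := key m
  have e : ∀ i j : Fin 3, coeff (Finsupp.single i 4) (X j ^ 4 : MvPolynomial (Fin 3) ℂ) = if i = j then 1 else 0 := by
    intro i j
    rw [X_pow_eq_monomial, coeff_monomial]
    simp [Finsupp.single_left_inj, eq_comm]
  have n1 := xi_mul_ne 1 2 (by decide)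
  have n2 := xi_mul_ne 2 0 (by decide)
  have n3 := xi_mul_ne 0 1 (by decide)
  fin_cases m <;>
  simpa [Fin.sum_univ_three, invBasis, MvPolynomial.lcoeff, e, n1, n2, n3] using k

/-- The space of `G`-invariant elements of `Sym⁴(V^∨) ⊗ Λ²(V)` is three-dimensional:
it is exactly the span of `v₁⁴ ⊗ ξ₂∧ξ₃`, `v₂⁴ ⊗ ξ₃∧ξ₁`, `v₃⁴ ⊗ ξ₁∧ξ₂`, and these
three elements are linearly independent. -/
theorem sym4_lambda2_invariants :
    (∀ x ∈ Sym4Lambda2,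
      ((∀ g ∈ Gset, tensorAct g x = x) ↔
        x ∈ Submodule.span ℂ (Set.range invBasis))) ∧
    LinearIndependent ℂ invBasis := by
  refine ⟨fun x hx => ⟨fun h => ?_, fun h g hg => ?_⟩, linInd⟩
  · have hz := Complex.isPrimitiveRoot_exp 5 (by norm_num)
    rw [← avg_inv _ hz.pow_eq_one x h]
    have hle : Submodule.span ℂ gens ≤
        (Submodule.span ℂ (Set.range invBasis)).comap (avg (Complex.exp (2 * Real.pi * Complex.I / (5 : ℕ)))) :=
      Submodule.span_le.2 fun t ht => avg_gen _ hz t ht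
    exact hle (S_le hx)
  · have hle : Submodule.span ℂ (Set.range invBasis) ≤
        LinearMap.eqLocus (tensorAct g) LinearMap.id :=
      Submodule.span_le.2 (by rintro _ ⟨m, rfl⟩; exact inv_basis g hg m)
    exact hle h

end
end

section
/- Let A = Λ(ℂ³) be the exterior algebra on ℂ³ with its standard ℤ-grading, carrying the G-action induced functorially by the action of G on ℂ³. Then: (a) every G-equivariant ℂ-linear map A ⊗ A ⊗ A → A that is homogeneous of degree +1 (i.e. maps Λ^{i₁} ⊗ Λ^{i₂} ⊗ Λ^{i₃} into Λ^{i₁+i₂+i₃+1} for all i₁,i₂,i₃) is zero; and (b) every G-equivariant ℂ-linear map A ⊗ A ⊗ A → A that is homogeneous of degree -2 is zero. -/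
set_option synthInstance.maxHeartbeats 1000000
set_option maxHeartbeats 1000000

noncomputable section

/-- `A = Λ(ℂ³)`, the exterior algebra on `ℂ³` with its standard grading. -/
abbrev A := ExteriorAlgebra ℂ V

/-- The action of the diagonal matrix `g` on the exterior algebra `A = Λ(ℂ³)`,
induced functorially from the action on `ℂ³`. -/
def extAct (g : Fin 3 → ℂ) : A →ₗ[ℂ] A :=
  (ExteriorAlgebra.map (diagMap g)).toLinearMap

/-- A trilinear map `φ : A ⊗ A ⊗ A → A` (curried) is `G`-equivariant if it commutes
with the action of every `g ∈ G`. -/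
def IsEquivariant (φ : A →ₗ[ℂ] A →ₗ[ℂ] A →ₗ[ℂ] A) : Prop :=
  ∀ g ∈ Gset, ∀ a₃ a₂ a₁ : A,
    φ (extAct g a₃) (extAct g a₂) (extAct g a₁) = extAct g (φ a₃ a₂ a₁)

/-- Weight vectors of degree `k` in `A`. -/
def Wt (k : ℕ) : Set A :=
  {y | y ∈ ⋀[ℂ]^k V ∧ ∃ n : Fin 3 → ℕ, (∀ j, n j ≤ 1) ∧ n 0 + n 1 + n 2 = k ∧
    ∀ g : Fin 3 → ℂ, extAct g y = (g 0 ^ n 0 * g 1 ^ n 1 * g 2 ^ n 2) • y}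

lemma span_Wt (k : ℕ) : ⋀[ℂ]^k V ≤ Submodule.span ℂ (Wt k) := by
  have hv := (Pi.basisFun ℂ (Fin 3)).span_eq
  have h := exteriorPower.ιMulti_family_span_fixedDegree_of_span ℂ (n := k) hv
  conv_lhs => rw [← h]
  apply Submodule.span_mono
  rintro _ ⟨s, rfl⟩
  refine ⟨?_, fun j => if j ∈ s.1 then 1 else 0, ?_, ?_, ?_⟩
  · rw [← h]; exact Submodule.subset_span ⟨s, rfl⟩
  · intro j; dsimp only; split_ifs <;> simp
  · have h2 : s.1.card = k := s.2
    have h4 : s.1.card = ∑ j : Fin 3, if j ∈ s.1 then 1 else 0 := by simp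
    rw [Fin.sum_univ_three] at h4
    exact h4.symm.trans h2
  · intro g
    have h3 : ∏ j : Fin 3, g j ^ (if j ∈ s.1 then 1 else 0) = ∏ i : Fin k, g (Set.powersetCard.ofFinEmbEquiv.symm s i) := by
      have : ∏ j : Fin 3, g j ^ (if j ∈ s.1 then 1 else 0) = ∏ j ∈ s.1, g j := by
        simp [pow_ite, Finset.prod_ite_mem]
      rw [this]
      symm
      apply Finset.prod_bij (fun i _ => Set.powersetCard.ofFinEmbEquiv.symm s i)
      · intro i _
        exact (Set.powersetCard.mem_range_ofFinEmbEquiv_symm_iff_mem s _).1 ⟨i, rfl⟩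
      · intro a _ b _ hab
        exact (Set.powersetCard.ofFinEmbEquiv.symm s).injective hab
      · intro b hb
        obtain ⟨i, hi⟩ := (Set.powersetCard.mem_range_ofFinEmbEquiv_symm_iff_mem s b).2 hb
        exact ⟨i, Finset.mem_univ _, hi⟩
      · intros; rfl
    rw [Fin.prod_univ_three] at h3
    rw [h3]
    simp only [extAct, AlgHom.toLinearMap_apply, ExteriorAlgebra.ιMulti_family,
      ExteriorAlgebra.map_apply_ιMulti]
    rw [← (ExteriorAlgebra.ιMulti ℂ k).map_smul_univ]
    congr 1
    funext i
    ext j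
    simp only [diagMap, Function.comp_apply, Pi.basisFun_apply, LinearMap.pi_apply,
      LinearMap.smul_apply, LinearMap.proj_apply, smul_eq_mul, Pi.smul_apply, Pi.single_apply]
    split_ifs with h
    · rw [h]
    · simp

lemma span_all : Submodule.span ℂ (⋃ k, Wt k) = ⊤ := by
  rw [eq_top_iff, ← (DirectSum.Decomposition.isInternal (fun i : ℕ => ⋀[ℂ]^i V)).submodule_iSup_eq_top]
  rw [Submodule.span_iUnion]
  exact iSup_mono span_Wt

lemma geom_zero_s10 {u : ℂ} (h5 : u ^ 5 = 1) (h : u ≠ 1) : ∑ a ∈ Finset.range 5, u ^ a = 0 := by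
  have := mul_geom_sum u 5
  rw [h5, sub_self] at this
  exact (mul_eq_zero.1 this).resolve_left (sub_ne_zero.2 h)

lemma key (m : Fin 3 → ℕ) (hm : ∀ j, m j ≤ 3) (k : ℕ)
    (hk : k = m 0 + m 1 + m 2 + 1 ∨ k + 2 = m 0 + m 1 + m 2) (x : A)
    (hx : ∀ g ∈ Gset, extAct g x = (g 0 ^ m 0 * g 1 ^ m 1 * g 2 ^ m 2) • x)
    (hxk : x ∈ ⋀[ℂ]^k V) : x = 0 := by
  obtain ⟨z, hz⟩ : ∃ z : ℂ, IsPrimitiveRoot z 5 := ⟨_, Complex.isPrimitiveRoot_exp 5 (by norm_num)⟩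
  have z5 : z ^ 5 = 1 := hz.pow_eq_one
  let gg : ℕ → ℕ → Fin 3 → ℂ := fun a b => ![z ^ a, z ^ b, z ^ (4 * a + 4 * b)]
  have hgg : ∀ a b, gg a b ∈ Gset := by
    intro a b
    have h5 : ∀ t : ℕ, (z ^ t) ^ 5 = 1 := fun t => by rw [← pow_mul, mul_comm, pow_mul, z5, one_pow]
    refine ⟨?_, ?_⟩
    · intro i
      fin_cases i <;> exact h5 _
    · change z ^ a * z ^ b * z ^ (4 * a + 4 * b) = 1
      rw [← h5 (a + b)]; ring
  let P : A →ₗ[ℂ] A := ∑ a ∈ Finset.range 5, ∑ b ∈ Finset.range 5,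
    ((gg a b 0) ^ (4 * m 0) * (gg a b 1) ^ (4 * m 1) * (gg a b 2) ^ (4 * m 2)) • extAct (gg a b)
  have hP : ∀ y, P y = ∑ a ∈ Finset.range 5, ∑ b ∈ Finset.range 5,
    ((gg a b 0) ^ (4 * m 0) * (gg a b 1) ^ (4 * m 1) * (gg a b 2) ^ (4 * m 2)) •
      extAct (gg a b) y := by
    intro y
    simp only [P, LinearMap.sum_apply, LinearMap.smul_apply]
  have h1 : P x = (25 : ℂ) • x := by
    rw [hP]
    have : ∀ a b, ((gg a b 0) ^ (4 * m 0) * (gg a b 1) ^ (4 * m 1) * (gg a b 2) ^ (4 * m 2)) •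
      extAct (gg a b) x = x := by
      intro a b
      rw [hx _ (hgg a b), smul_smul]
      have e : ∀ j, gg a b j ^ (4 * m j) * gg a b j ^ m j = 1 := by
        intro j
        rw [← pow_add, show 4 * m j + m j = 5 * m j by ring, pow_mul, (hgg a b).1 j, one_pow]
      have : (gg a b 0) ^ (4 * m 0) * (gg a b 1) ^ (4 * m 1) * (gg a b 2) ^ (4 * m 2) *
        (gg a b 0 ^ m 0 * gg a b 1 ^ m 1 * gg a b 2 ^ m 2) = 1 := by
        linear_combination (gg a b 1 ^ (4 * m 1) * gg a b 1 ^ m 1) * (gg a b 2 ^ (4 * m 2) * gg a b 2 ^ m 2) * e 0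
          + (gg a b 2 ^ (4 * m 2) * gg a b 2 ^ m 2) * e 1 + e 2
      rw [this, one_smul]
    simp only [this, Finset.sum_const, Finset.card_range, ← Nat.cast_smul_eq_nsmul ℂ, smul_smul]
    norm_num
  have h2 : P x = 0 := by
    have : Submodule.span ℂ (Wt k) ≤ LinearMap.ker P := by
      rw [Submodule.span_le]
      rintro y ⟨-, n, hn, hnk, hy⟩
      rw [SetLike.mem_coe, LinearMap.mem_ker, hP]
      have e : ∀ a b, ((gg a b 0) ^ (4 * m 0) * (gg a b 1) ^ (4 * m 1) * (gg a b 2) ^ (4 * m 2)) •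
        extAct (gg a b) y = ((z ^ (4 * m 0 + n 0 + 4 * (4 * m 2 + n 2))) ^ a *
          (z ^ (4 * m 1 + n 1 + 4 * (4 * m 2 + n 2))) ^ b) • y := by
        intro a b
        rw [hy, smul_smul]
        congr 1
        change (z ^ a) ^ (4 * m 0) * (z ^ b) ^ (4 * m 1) * (z ^ (4 * a + 4 * b)) ^ (4 * m 2) *
          ((z ^ a) ^ (n 0) * (z ^ b) ^ (n 1) * (z ^ (4 * a + 4 * b)) ^ (n 2)) = _
        simp only [← pow_mul, ← pow_add]
        congr 1
        ring
      simp only [e, ← Finset.sum_smul, ← Finset.mul_sum, ← Finset.sum_mul]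
      have h5 : ∀ t : ℕ, (z ^ t) ^ 5 = 1 := fun t => by
        rw [← pow_mul, mul_comm, pow_mul, z5, one_pow]
      by_cases hu : z ^ (4 * m 0 + n 0 + 4 * (4 * m 2 + n 2)) = 1
      · by_cases hw : z ^ (4 * m 1 + n 1 + 4 * (4 * m 2 + n 2)) = 1
        · exfalso
          rw [hz.pow_eq_one_iff_dvd] at hu hw
          have := hm 0; have := hm 1; have := hm 2
          have := hn 0; have := hn 1; have := hn 2
          omega
        · rw [geom_zero_s10 (h5 _) hw, mul_zero, zero_smul]
      · rw [geom_zero_s10 (h5 _) hu, zero_mul, zero_smul]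
    exact this (span_Wt k hxk)
  rw [h1] at h2
  exact (smul_eq_zero.1 h2).resolve_left (by norm_num)

lemma tri_zero (φ : A →ₗ[ℂ] A →ₗ[ℂ] A →ₗ[ℂ] A)
    (h : ∀ i₁ i₂ i₃ : ℕ, ∀ a₁ ∈ Wt i₁, ∀ a₂ ∈ Wt i₂, ∀ a₃ ∈ Wt i₃, φ a₃ a₂ a₁ = 0) : φ = 0 := by
  refine LinearMap.ext_on span_all fun a₃ h₃ => ?_
  refine LinearMap.ext_on span_all fun a₂ h₂ => ?_
  refine LinearMap.ext_on span_all fun a₁ h₁ => ?_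
  obtain ⟨i₁, h₁⟩ := Set.mem_iUnion.1 h₁
  obtain ⟨i₂, h₂⟩ := Set.mem_iUnion.1 h₂
  obtain ⟨i₃, h₃⟩ := Set.mem_iUnion.1 h₃
  exact h i₁ i₂ i₃ a₁ h₁ a₂ h₂ a₃ h₃

lemma tri_key (φ : A →ₗ[ℂ] A →ₗ[ℂ] A →ₗ[ℂ] A) (hφ : IsEquivariant φ) (i₁ i₂ i₃ k : ℕ)
    (hk : k = i₁ + i₂ + i₃ + 1 ∨ k + 2 = i₁ + i₂ + i₃) (a₁ a₂ a₃ : A)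
    (h₁ : a₁ ∈ Wt i₁) (h₂ : a₂ ∈ Wt i₂) (h₃ : a₃ ∈ Wt i₃) (h : φ a₃ a₂ a₁ ∈ ⋀[ℂ]^k V) :
    φ a₃ a₂ a₁ = 0 := by
  obtain ⟨-, n₁, b₁, s₁, w₁⟩ := h₁
  obtain ⟨-, n₂, b₂, s₂, w₂⟩ := h₂
  obtain ⟨-, n₃, b₃, s₃, w₃⟩ := h₃
  refine key (fun j => n₁ j + n₂ j + n₃ j) ?_ k ?_ _ ?_ h
  · intro j
    have := b₁ j; have := b₂ j; have := b₃ j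
    omega
  · omega
  · intro g hg
    rw [← hφ g hg, w₁, w₂, w₃]
    simp only [map_smul, LinearMap.smul_apply, smul_smul]
    congr 1
    ring

/-- (a) Every `G`-equivariant trilinear map `A ⊗ A ⊗ A → A` which is homogeneous of
degree `+1` (mapping `Λ^{i₁} ⊗ Λ^{i₂} ⊗ Λ^{i₃}` into `Λ^{i₁+i₂+i₃+1}`) vanishes;
(b) every `G`-equivariant trilinear map `A ⊗ A ⊗ A → A` which is homogeneous of
degree `-2` (mapping `Λ^{i₁} ⊗ Λ^{i₂} ⊗ Λ^{i₃}` into `Λ^{i₁+i₂+i₃-2}`, which is `0`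
when `i₁+i₂+i₃ < 2`) vanishes. -/
theorem equivariant_trilinear_maps_of_degree_one_or_minus_two_vanish :
    (∀ φ : A →ₗ[ℂ] A →ₗ[ℂ] A →ₗ[ℂ] A, IsEquivariant φ →
      (∀ (i₁ i₂ i₃ : ℕ), ∀ a₁ ∈ ⋀[ℂ]^i₁ V, ∀ a₂ ∈ ⋀[ℂ]^i₂ V, ∀ a₃ ∈ ⋀[ℂ]^i₃ V,
        φ a₃ a₂ a₁ ∈ ⋀[ℂ]^(i₁ + i₂ + i₃ + 1) V) →
      φ = 0) ∧
    (∀ φ : A →ₗ[ℂ] A →ₗ[ℂ] A →ₗ[ℂ] A, IsEquivariant φ →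
      (∀ (i₁ i₂ i₃ : ℕ), ∀ a₁ ∈ ⋀[ℂ]^i₁ V, ∀ a₂ ∈ ⋀[ℂ]^i₂ V, ∀ a₃ ∈ ⋀[ℂ]^i₃ V,
        (i₁ + i₂ + i₃ < 2 → φ a₃ a₂ a₁ = 0) ∧
        (∀ j : ℕ, (j : ℤ) = (i₁ : ℤ) + i₂ + i₃ - 2 → φ a₃ a₂ a₁ ∈ ⋀[ℂ]^j V)) →
      φ = 0) := by
  refine ⟨fun φ hφ h => tri_zero φ fun i₁ i₂ i₃ a₁ h₁ a₂ h₂ a₃ h₃ => ?_,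
    fun φ hφ h => tri_zero φ fun i₁ i₂ i₃ a₁ h₁ a₂ h₂ a₃ h₃ => ?_⟩
  · exact tri_key φ hφ i₁ i₂ i₃ _ (Or.inl rfl) a₁ a₂ a₃ h₁ h₂ h₃
      (h i₁ i₂ i₃ a₁ h₁.1 a₂ h₂.1 a₃ h₃.1)
  · obtain ⟨hlt, hge⟩ := h i₁ i₂ i₃ a₁ h₁.1 a₂ h₂.1 a₃ h₃.1
    by_cases hs : i₁ + i₂ + i₃ < 2
    · exact hlt hs
    · exact tri_key φ hφ i₁ i₂ i₃ (i₁ + i₂ + i₃ - 2) (Or.inr (by omega)) a₁ a₂ a₃ h₁ h₂ h₃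
        (hge _ (by omega))

end
end
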